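/- arXiv:1305.6330 — 2 statements merged into one kernel-verified Lean document; each statement's English description precedes it below -/
import Mathlib

section
/- Let 𝒜 be an abelian category. Suppose given a commutative diagram in 𝒜 with exact rows 0 → K' → B' →^{p'} A' → 0 and 0 → K → B →^{p} A → 0, together with vertical morphisms κ : K' → K, β : B' → B and α : A' → A making the diagram commute, such that κ is an isomorphism. Then the sequence 0 → B' → B ⊕ A' → A → 0 is exact, where the first map has components β and p', and the second map sends a pair (x, y) to p(x) − α(y). -/
/-!
The sequence says that `B'` is the pullback of `p` and `α`. The kernel of the first map is
`ker β ⊓ ker p'`; since `ker p'` is the image of `K'`, this vanishes because `i' ≫ β = κ ≫ i` is a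
monomorphism. Conversely, given `(x, y)` with `p x = α y`, choose a preimage `b` of `y` under `p'`:
then `x - β b` lies in `ker p`, hence comes from `K`, hence from `K'` because `κ` is an epimorphism,
and correcting `b` by this element of `K'` gives a preimage of `(x, y)`.
Elements and preimages are taken up to epimorphic refinement of the source.
-/

open CategoryTheory CategoryTheory.Limits

lemma mono_biprod_lift_of_mono_f_comp {C : Type*} [Category* C] [Preadditive C] [Balanced C]
    {S : ShortComplex C} (hS : S.Exact) {Y : C} [HasBinaryBiproduct Y S.X₃]
    (k : S.X₂ ⟶ Y) [Mono (S.f ≫ k)] : Mono (biprod.lift k S.g) := by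
  have : Mono S.f := mono_of_mono S.f k
  refine Preadditive.mono_of_cancel_zero _ fun b hb => ?_
  have hbk : b ≫ k = 0 := by simpa using hb =≫ biprod.fst
  have hbg : b ≫ S.g = 0 := by simpa using hb =≫ biprod.snd
  obtain ⟨a, rfl⟩ : ∃ a, a ≫ S.f = b := ⟨hS.lift b hbg, hS.lift_f b hbg⟩
  have ha : a = 0 := zero_of_comp_mono (S.f ≫ k) (by rw [← Category.assoc, hbk])
  rw [ha, zero_comp]

section

variable {C : Type*} [Category* C] [Abelian C] {S₁ S₂ : ShortComplex C} (φ : S₁ ⟶ S₂)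
  [Epi φ.τ₁] [Epi S₁.g]

lemma exists_lift_up_to_refinements_of_epi_τ₁ (hS₂ : S₂.Exact) {T : C} (x : T ⟶ S₂.X₂)
    (y : T ⟶ S₁.X₃) (hxy : x ≫ S₂.g = y ≫ φ.τ₃) :
    ∃ (T' : C) (π : T' ⟶ T) (_ : Epi π) (b : T' ⟶ S₁.X₂),
      π ≫ x = b ≫ φ.τ₂ ∧ π ≫ y = b ≫ S₁.g := by
  obtain ⟨T₁, π₁, _, b, hb⟩ := surjective_up_to_refinements_of_epi S₁.g y
  have h_defect : (π₁ ≫ x - b ≫ φ.τ₂) ≫ S₂.g = 0 := by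
    simp [hxy, reassoc_of% hb, φ.comm₂₃]
  obtain ⟨T₂, π₂, _, k, hk⟩ := hS₂.exact_up_to_refinements _ h_defect
  obtain ⟨T₃, π₃, _, k', hk'⟩ := surjective_up_to_refinements_of_epi φ.τ₁ k
  refine ⟨T₃, π₃ ≫ π₂ ≫ π₁, inferInstance, π₃ ≫ π₂ ≫ b + k' ≫ S₁.f, ?_, ?_⟩
  · calc (π₃ ≫ π₂ ≫ π₁) ≫ x
        = π₃ ≫ π₂ ≫ b ≫ φ.τ₂ + π₃ ≫ π₂ ≫ (π₁ ≫ x - b ≫ φ.τ₂) := by simp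
      _ = π₃ ≫ π₂ ≫ b ≫ φ.τ₂ + k' ≫ φ.τ₁ ≫ S₂.f := by rw [hk, reassoc_of% hk']
      _ = (π₃ ≫ π₂ ≫ b + k' ≫ S₁.f) ≫ φ.τ₂ := by simp [φ.comm₁₂]
  · simp [hb]

lemma exact_shortComplex'_of_epi_τ₁ (hS₂ : S₂.Exact) :
    (CommSq.mk φ.comm₂₃).shortComplex'.Exact := by
  rw [ShortComplex.exact_iff_exact_up_to_refinements]
  intro T (z : T ⟶ S₂.X₂ ⊞ S₁.X₃) (hz : z ≫ biprod.desc S₂.g (-φ.τ₃) = 0)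
  have hz' : (z ≫ biprod.fst) ≫ S₂.g = (z ≫ biprod.snd) ≫ φ.τ₃ := by
    simpa [biprod.desc_eq, add_neg_eq_zero] using hz
  obtain ⟨T', π, hπ, b, h_fst, h_snd⟩ :=
    exists_lift_up_to_refinements_of_epi_τ₁ φ hS₂ _ _ hz'
  refine ⟨T', π, hπ, b, ?_⟩
  change π ≫ z = b ≫ biprod.lift φ.τ₂ S₁.g
  apply biprod.hom_ext
  · simpa using h_fst
  · simpa using h_snd

end

/-- A morphism of short exact sequences in an abelian category whose map on kernels is an
isomorphism induces a short exact "Mayer–Vietoris" sequence `0 → B' → B ⊞ A' → A → 0`. -/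
theorem statement0 {𝒜 : Type*} [Category 𝒜] [Abelian 𝒜]
    {K' B' A' K B A : 𝒜}
    (i' : K' ⟶ B') (p' : B' ⟶ A') (i : K ⟶ B) (p : B ⟶ A)
    (κ : K' ⟶ K) (β : B' ⟶ B) (α : A' ⟶ A)
    (w' : i' ≫ p' = 0) (w : i ≫ p = 0)
    (h' : (ShortComplex.mk i' p' w').ShortExact)
    (h : (ShortComplex.mk i p w).ShortExact)
    (comm1 : i' ≫ β = κ ≫ i)
    (comm2 : β ≫ p = p' ≫ α)
    (hκ : IsIso κ) :
    (ShortComplex.mk (biprod.lift β p') (biprod.desc p (-α))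
      (by rw [biprod.lift_desc, Preadditive.comp_neg, comm2, add_neg_cancel])).ShortExact := by
  let φ : ShortComplex.mk i' p' w' ⟶ ShortComplex.mk i p w := ⟨κ, β, α, comm1.symm, comm2⟩
  have : Mono i := h.mono_f
  have : Epi p := h.epi_g
  have : Epi φ.τ₁ := inferInstanceAs (Epi κ)
  have : Epi (ShortComplex.mk i' p' w').g := h'.epi_g
  have : Mono (i' ≫ β) := comm1 ▸ mono_comp κ i
  exact
    { exact := exact_shortComplex'_of_epi_τ₁ φ h.exact
      mono_f := mono_biprod_lift_of_mono_f_comp h'.exact β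
      epi_g := epi_of_epi_fac (biprod.inl_desc p (-α)) }
end

section
/- Let k be a field and let B be a principal ideal domain which is a k-algebra such that B has exactly b maximal ideals with b ≥ 2 finite, and such that for every maximal ideal m of B the composite ring homomorphism k → B → B/m is bijective. Let J be the Jacobson radical of B (the intersection of all maximal ideals of B) and let A = { x ∈ B : ∃ c ∈ k, x − (algebraMap k B) c ∈ J }, a subring of B containing the image of k. Let s₀ ∈ B be nonzero and suppose that J ⊆ s₀ • A, i.e. every element of J is of the form s₀ * a with a ∈ A. Then s₀ is a unit of B, and the quotient k-vector space B / (s₀ • A) has dimension b − 1 over k. -/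
/-!
Put `I = {a | s₀ a ∈ J}`. The hypothesis gives `J = s₀ I`, and shows that the ideal `I` lies in `A`.
Since `A` is local with maximal ideal `J` while `B` has two maximal ideals, `J` is the conductor of
`A` in `B`, i.e. the largest ideal of `B` inside `A`. Hence `I ⊆ J` and `J = s₀ J`, so Nakayama's
lemma yields `r` with `(1 - s₀ r) J = 0`. The annihilator of `J` lies in `J`: as
`B` is a semilocal domain and not a field, `J ≠ 0` and the annihilator vanishes. Hence `s₀ r ≡ 1`
modulo `J`, and `s₀` is a unit.

Now `B / s₀ A ≅ B / A`, where `A` is the preimage of the line of constants under `B → B / J`, and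
`B / J ≅ k ^ b` by the Chinese remainder theorem.
-/

/-- The subring `A = k + J` of `B` (`J` the Jacobson radical of `B`), i.e. the set of
`x ∈ B` which are congruent to a constant from `k` modulo `J`, viewed as a `k`-submodule
of `B`.  It is the local ring of an ordinary fold singularity. -/
def foldSub (k B : Type*) [Field k] [CommRing B] [Algebra k B] : Submodule k B where
  carrier := {x | ∃ c : k, x - algebraMap k B c ∈ Ideal.jacobson (⊥ : Ideal B)}
  zero_mem' := ⟨0, by simp⟩
  add_mem' := by
    rintro x y ⟨c, hc⟩ ⟨c', hc'⟩
    refine ⟨c + c', ?_⟩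
    have h : x + y - algebraMap k B (c + c')
        = (x - algebraMap k B c) + (y - algebraMap k B c') := by
      rw [map_add]; ring
    rw [h]
    exact Ideal.add_mem _ hc hc'
  smul_mem' := by
    rintro c x ⟨c', hc'⟩
    refine ⟨c * c', ?_⟩
    have h : c • x - algebraMap k B (c * c')
        = algebraMap k B c * (x - algebraMap k B c') := by
      rw [map_mul, Algebra.smul_def]; ring
    rw [h]
    exact Ideal.mul_mem_left _ _ hc'

section JacobsonRadical

variable {B : Type*} [CommRing B]

theorem jacobson_bot_eq_iInf_maximalSpectrum :
    (⊥ : Ideal B).jacobson = ⨅ m : MaximalSpectrum B, m.asIdeal := by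
  rw [Ideal.jacobson_bot, Ring.jacobson_eq_sInf_isMaximal, ← MaximalSpectrum.range_asIdeal,
    sInf_range]

theorem jacobson_bot_le_of_isMaximal (m : Ideal B) [m.IsMaximal] :
    (⊥ : Ideal B).jacobson ≤ m :=
  Ideal.jacobson_bot.trans_le (Ring.jacobson_le_of_isMaximal m)

theorem jacobson_bot_ne_bot_of_not_isField [IsDomain B] [Finite (MaximalSpectrum B)]
    (hB : ¬IsField B) : (⊥ : Ideal B).jacobson ≠ ⊥ := by
  cases nonempty_fintype (MaximalSpectrum B)
  intro h
  have hinf : Finset.univ.inf MaximalSpectrum.asIdeal ≤ (⊥ : Ideal B) := by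
    rw [Finset.inf_univ_eq_iInf, ← jacobson_bot_eq_iInf_maximalSpectrum, h]
  obtain ⟨m, -, hm⟩ := Ideal.isPrime_bot.inf_le'.mp hinf
  exact Ring.ne_bot_of_isMaximal_of_not_isField m.isMaximal hB (le_bot_iff.mp hm)

theorem annihilator_eq_bot_of_ne_bot [NoZeroDivisors B] {I : Ideal B} (hI : I ≠ ⊥) :
    I.annihilator = ⊥ := by
  obtain ⟨t, ht, ht0⟩ := Submodule.exists_mem_ne_zero_of_ne_bot hI
  refine (Submodule.eq_bot_iff _).mpr fun a ha => ?_
  exact (mul_eq_zero.mp (Submodule.mem_annihilator.mp ha t ht)).resolve_right ht0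

theorem not_isField_of_nontrivial_maximalSpectrum [Nontrivial (MaximalSpectrum B)] :
    ¬IsField B := by
  intro hB
  obtain ⟨m, n, hmn⟩ := exists_pair_ne (MaximalSpectrum B)
  have := hB.nontrivial
  have hbot := Ring.isField_iff_maximal_bot.mp hB
  exact hmn (MaximalSpectrum.ext ((hbot.eq_of_le m.isMaximal.ne_top bot_le).symm.trans
    (hbot.eq_of_le n.isMaximal.ne_top bot_le)))

theorem annihilator_jacobson_bot_le_of_one_lt_card [IsDomain B]
    (h : 1 < Nat.card (MaximalSpectrum B)) :
    (⊥ : Ideal B).jacobson.annihilator ≤ (⊥ : Ideal B).jacobson := by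
  have : Finite (MaximalSpectrum B) := Nat.finite_of_card_ne_zero (by omega)
  have : Nontrivial (MaximalSpectrum B) := Finite.one_lt_card_iff_nontrivial.mp h
  rw [annihilator_eq_bot_of_ne_bot
    (jacobson_bot_ne_bot_of_not_isField not_isField_of_nontrivial_maximalSpectrum)]
  exact bot_le

theorem isUnit_of_jacobson_bot_le_span_mul {s : B} (hfg : (⊥ : Ideal B).jacobson.FG)
    (hann : (⊥ : Ideal B).jacobson.annihilator ≤ (⊥ : Ideal B).jacobson)
    (h : (⊥ : Ideal B).jacobson ≤ Ideal.span {s} * (⊥ : Ideal B).jacobson) : IsUnit s := by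
  obtain ⟨r, hr, hrJ⟩ :=
    Submodule.exists_sub_one_mem_and_smul_eq_zero_of_fg_of_le_smul _ _ hfg h
  have hrad : r ∈ (⊥ : Ideal B).jacobson := hann (Submodule.mem_annihilator.mpr hrJ)
  have hunit : IsUnit (r - 1) := by
    simpa [neg_add_eq_sub] using (Ideal.mem_jacobson_bot.mp (neg_mem hrad) 1).neg
  exact isUnit_of_dvd_unit (Ideal.mem_span_singleton.mp hr) hunit

end JacobsonRadical

theorem finrank_quotient_iInf_of_bijective {k B ι : Type*} [CommRing k] [Nontrivial k]
    [CommRing B] [Algebra k B] [Finite ι] {I : ι → Ideal B}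
    (hI : Pairwise (Function.onFun IsCoprime I))
    (hres : ∀ i, Function.Bijective (algebraMap k (B ⧸ I i))) :
    Module.finrank k (B ⧸ ⨅ i, I i) = Nat.card ι := by
  cases nonempty_fintype ι
  let crt : (B ⧸ ⨅ i, I i) ≃ₐ[k] ∀ i, B ⧸ I i :=
    AlgEquiv.ofRingEquiv (f := Ideal.quotientInfRingEquivPiQuotient I hI) fun _ => rfl
  let coords : (∀ i, B ⧸ I i) ≃ₗ[k] (ι → k) :=
    LinearEquiv.piCongrRight fun i =>
      (LinearEquiv.ofBijective (Algebra.linearMap k (B ⧸ I i)) (hres i)).symm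
  rw [(crt.toLinearEquiv.trans coords).finrank_eq, Module.finrank_fintype_fun_eq_card,
    Nat.card_eq_fintype_card]

theorem finrank_submodule_one (k A : Type*) [Field k] [Ring A] [Algebra k A] [Nontrivial A] :
    Module.finrank k (1 : Submodule k A) = 1 := by
  rw [Submodule.one_eq_span, finrank_span_singleton one_ne_zero]

theorem finrank_quotient_map_mulLeft {k B : Type*} [CommRing k] [Ring B] [Algebra k B]
    (N : Submodule k B) {s : B} (hs : IsUnit s) :
    Module.finrank k (B ⧸ N.map (LinearMap.mulLeft k s)) = Module.finrank k (B ⧸ N) :=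
  (Submodule.Quotient.equiv N _ (LinearEquiv.ofBijective (LinearMap.mulLeft k s)
    (IsUnit.isUnit_iff_mulLeft_bijective.mp hs)) rfl).finrank_eq.symm

section FoldSub

variable {k B : Type*} [Field k] [CommRing B] [Algebra k B]

theorem jacobson_bot_le_foldSub :
    (⊥ : Ideal B).jacobson.restrictScalars k ≤ foldSub k B :=
  fun x hx => ⟨0, by simpa using hx⟩

theorem mem_jacobson_bot_of_mem_foldSub_of_mem_isMaximal {x : B} (hx : x ∈ foldSub k B)
    {m : Ideal B} [hm : m.IsMaximal] (hxm : x ∈ m) : x ∈ (⊥ : Ideal B).jacobson := by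
  obtain ⟨c, hc⟩ := hx
  have hcm : algebraMap k B c ∈ m :=
    (m.sub_mem_iff_right hxm).mp (jacobson_bot_le_of_isMaximal m hc)
  have hc0 : c = 0 := by
    by_contra h
    exact hm.ne_top (m.eq_top_of_isUnit_mem hcm ((IsUnit.mk0 c h).map (algebraMap k B)))
  simpa [hc0] using hc

theorem mem_jacobson_bot_of_forall_mul_mem_foldSub [Nontrivial (MaximalSpectrum B)] {a : B}
    (ha : ∀ x, a * x ∈ foldSub k B) : a ∈ (⊥ : Ideal B).jacobson := by
  obtain ⟨m, n, hmn⟩ := exists_pair_ne (MaximalSpectrum B)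
  obtain ⟨x, hxm, hxn⟩ : ∃ x ∈ m.asIdeal, x ∉ n.asIdeal :=
    SetLike.not_le_iff_exists.mp fun hle =>
      hmn (MaximalSpectrum.ext (m.isMaximal.eq_of_le n.isMaximal.ne_top hle))
  have haxJ : a * x ∈ (⊥ : Ideal B).jacobson :=
    mem_jacobson_bot_of_mem_foldSub_of_mem_isMaximal (ha x) (m.asIdeal.mul_mem_left a hxm)
  have han : a ∈ n.asIdeal :=
    (n.isMaximal.isPrime.mem_or_mem
      (jacobson_bot_le_of_isMaximal n.asIdeal haxJ)).resolve_right hxn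
  have haA : a ∈ foldSub k B := mul_one a ▸ ha 1
  exact mem_jacobson_bot_of_mem_foldSub_of_mem_isMaximal haA han

theorem jacobson_bot_le_span_mul_of_forall_exists_mem_foldSub [Nontrivial (MaximalSpectrum B)]
    (hann : (⊥ : Ideal B).jacobson.annihilator ≤ (⊥ : Ideal B).jacobson) {s : B}
    (hJ : ∀ x ∈ (⊥ : Ideal B).jacobson, ∃ a ∈ foldSub k B, x = s * a) :
    (⊥ : Ideal B).jacobson ≤ Ideal.span {s} * (⊥ : Ideal B).jacobson := by
  intro x hx
  obtain ⟨a, -, rfl⟩ := hJ x hx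
  refine Ideal.mem_span_singleton_mul.mpr
    ⟨a, mem_jacobson_bot_of_forall_mul_mem_foldSub (k := k) fun y => ?_, rfl⟩
  obtain ⟨a', ha', hsa'⟩ := hJ (s * a * y) (Ideal.mul_mem_right y _ hx)
  -- `s` kills `a * y - a'`, hence so does every element of `J`, being a multiple of `s`.
  have hdiff : a * y - a' ∈ (⊥ : Ideal B).jacobson.annihilator := by
    refine Submodule.mem_annihilator.mpr fun z hz => ?_
    obtain ⟨w, -, rfl⟩ := hJ z hz
    rw [smul_eq_mul]
    linear_combination w * hsa'
  exact ((foldSub k B).sub_mem_iff_left ha').mp (jacobson_bot_le_foldSub (hann hdiff))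

theorem foldSub_eq_comap_one :
    foldSub k B = (1 : Submodule k (B ⧸ (⊥ : Ideal B).jacobson)).comap
      (Ideal.Quotient.mkₐ k (⊥ : Ideal B).jacobson).toLinearMap := by
  ext x
  rw [Submodule.mem_comap, Submodule.mem_one]
  exact exists_congr fun c =>
    (Ideal.Quotient.mk_eq_mk_iff_sub_mem x (algebraMap k B c)).symm.trans eq_comm

theorem finrank_quotient_foldSub_add_one [Nontrivial (B ⧸ (⊥ : Ideal B).jacobson)]
    [Module.Finite k (B ⧸ (⊥ : Ideal B).jacobson)] :
    Module.finrank k (B ⧸ foldSub k B) + 1 = Module.finrank k (B ⧸ (⊥ : Ideal B).jacobson) := by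
  let f := (1 : Submodule k (B ⧸ (⊥ : Ideal B).jacobson)).mkQ ∘ₗ
    (Ideal.Quotient.mkₐ k (⊥ : Ideal B).jacobson).toLinearMap
  have hf : Function.Surjective f :=
    (Submodule.mkQ_surjective _).comp (Ideal.Quotient.mkₐ_surjective k _)
  have hker : foldSub k B = LinearMap.ker f := by
    rw [LinearMap.ker_comp, Submodule.ker_mkQ, foldSub_eq_comap_one]
  rw [hker, (f.quotKerEquivOfSurjective hf).finrank_eq,
    ← finrank_submodule_one k (B ⧸ (⊥ : Ideal B).jacobson), Submodule.finrank_quotient_add_finrank]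

end FoldSub

theorem statement8_general (k B : Type*) [Field k] [CommRing B] [Algebra k B]
    (hfg : (⊥ : Ideal B).jacobson.FG)
    (hann : (⊥ : Ideal B).jacobson.annihilator ≤ (⊥ : Ideal B).jacobson)
    (b : ℕ) (hb : 2 ≤ b)
    (hcard : Nat.card {I : Ideal B // I.IsMaximal} = b)
    (hres : ∀ m : Ideal B, m.IsMaximal → Function.Bijective (algebraMap k (B ⧸ m)))
    (s₀ : B)
    (hJ : ∀ x ∈ Ideal.jacobson (⊥ : Ideal B), ∃ a ∈ foldSub k B, x = s₀ * a) :
    IsUnit s₀ ∧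
      Module.finrank k (B ⧸ (foldSub k B).map (LinearMap.mulLeft k s₀)) = b - 1 := by
  have hcard' : Nat.card (MaximalSpectrum B) = b :=
    (Nat.card_congr (MaximalSpectrum.equivSubtype B)).trans hcard
  have : Finite (MaximalSpectrum B) := Nat.finite_of_card_ne_zero (by omega)
  have : Nontrivial (MaximalSpectrum B) := Finite.one_lt_card_iff_nontrivial.mp (by omega)
  have hunit : IsUnit s₀ := isUnit_of_jacobson_bot_le_span_mul hfg hann
    (jacobson_bot_le_span_mul_of_forall_exists_mem_foldSub hann hJ)
  have hdim : Module.finrank k (B ⧸ (⊥ : Ideal B).jacobson) = b := by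
    rw [jacobson_bot_eq_iInf_maximalSpectrum, finrank_quotient_iInf_of_bijective
      (fun _ _ => MaximalSpectrum.isCoprime_of_ne) fun m => hres m.asIdeal m.isMaximal, hcard']
  have : Module.Finite k (B ⧸ (⊥ : Ideal B).jacobson) :=
    Module.finite_of_finrank_pos (by omega)
  have : Nontrivial (B ⧸ (⊥ : Ideal B).jacobson) :=
    Module.nontrivial_of_finrank_pos (R := k) (by omega)
  refine ⟨hunit, ?_⟩
  rw [finrank_quotient_map_mulLeft _ hunit, ← hdim, ← finrank_quotient_foldSub_add_one,
    Nat.add_sub_cancel]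

/-- Lemma 3.10 of the paper (`ComputeRank`), in its local-ring form: let `B` be a principal
ideal domain over a field `k` with exactly `b ≥ 2` maximal ideals, all with residue field
`k`; let `J` be its Jacobson radical and `A = k + J` the local ring of the associated fold
singularity.  If `s₀ ∈ B` is nonzero and `J ⊆ s₀ • A`, then `s₀` is a unit and the
`k`-vector space `B / (s₀ • A)` has dimension `b - 1`. -/
theorem statement8 (k B : Type*) [Field k] [CommRing B] [IsDomain B]
    [IsPrincipalIdealRing B] [Algebra k B]
    (b : ℕ) (hb : 2 ≤ b)
    (hcard : Nat.card {I : Ideal B // I.IsMaximal} = b)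
    (hres : ∀ m : Ideal B, m.IsMaximal → Function.Bijective (algebraMap k (B ⧸ m)))
    (s₀ : B) (hs₀ : s₀ ≠ 0)
    (hJ : ∀ x ∈ Ideal.jacobson (⊥ : Ideal B), ∃ a ∈ foldSub k B, x = s₀ * a) :
    IsUnit s₀ ∧
      Module.finrank k (B ⧸ (foldSub k B).map (LinearMap.mulLeft k s₀)) = b - 1 := by
  exact statement8_general k B (IsNoetherian.noetherian _)
    (annihilator_jacobson_bot_le_of_one_lt_card
      (by rwa [Nat.card_congr (MaximalSpectrum.equivSubtype B), hcard])) b hb hcard hres s₀ hJ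
end
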